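/- For every instance 𝓘 of the oblivious knapsack problem, the permutation Π returned by the algorithm Universal(𝓘) is a 2-robust universal policy, i.e., v(Opt(𝓘,C)) ≤ 2·v(Π(C)) for every capacity C with 0 ≤ C ≤ l(𝓘). -/

import Mathlib

/-!
Write `i ≻ j` for `DSucc v l t i j`.

A swap item `x` is worth at least as much as all items `i ≻ x` with `l i ≤ l x` together
(`sum_le_of_isSwapItem`): these items all belong to the greedy prefix which `x` beats. Since
`Universal` processes items by non-decreasing size, this yields an invariant `SeqInv` of the current
sequence: for every item `x` of the sequence,

* the items `p ≻ x` standing after `x` have total value at most `v x`, and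
* every swap item standing after `x` has value at most `v x`.

A swap item put at the front satisfies both by the property above. A non-swap item `x` that is
inserted right before `y` satisfies `x ≻ y` and `l y ≤ l x`, hence `v y ≤ v x`, and so inherits both
bounds from `y` (`inv_insertAfter`).

Fix `C`, let `P` be the greedy prefix for `C`, and `g` the item following it. The invariant gives
`v(P) ≤ v(Π(C))`: all of `P` is packed unless some `x ∉ P` is packed first, and then `x` pays for
every item of `P` standing after `x` (`sum_le_pack`). It also gives `v g ≤ v(Π(C))` if `g` is a swap
item, because the first item that fits has value at least `v g` (`swap_le_pack`). If `g` is not a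
swap item for `C`, then `v g ≤ v(P)`. The fractional relaxation bounds the optimum by `v(P) + v g`
(`sum_le_greedy`), so it is at most `2 * v(Π(C))`.
-/

/-- The packing of a list of items (a universal policy) for capacity `C`:
scan the list in order, starting from the empty packing, and add an item
whenever its size fits into the remaining capacity. -/
def pack {α R : Type*} [LinearOrder R] [Sub R] (size : α → R) : R → List α → List α
  | _, [] => []
  | C, x :: xs => if size x ≤ C then x :: pack size (C - size x) xs else pack size C xs

/-- The maximal prefix of a list of items fitting into capacity `C`. -/
def prefixPack {α R : Type*} [LinearOrder R] [Sub R] (size : α → R) : R → List α → List α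
  | _, [] => []
  | C, x :: xs => if size x ≤ C then x :: prefixPack size (C - size x) xs else []

/-- The tie-broken density order: `DSucc v l t i j` means `d̃(i) ≻ d̃(j)`,
i.e. `v i / l i > v j / l j`, or the densities are equal and `t i > t j`. -/
def DSucc {n : ℕ} (v l : Fin n → ℚ) (t : Fin n → Fin n) (i j : Fin n) : Prop :=
  v j / l j < v i / l i ∨ (v i / l i = v j / l j ∧ t j < t i)

instance {n : ℕ} (v l : Fin n → ℚ) (t : Fin n → Fin n) (i j : Fin n) :
    Decidable (DSucc v l t i j) := by unfold DSucc; exact inferInstance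

/-- `D` is the list of all items of size at most `C`, sorted strictly
decreasingly with respect to the tie-broken density order `d̃`. -/
def IsDensityList {n : ℕ} (v l : Fin n → ℚ) (t : Fin n → Fin n) (C : ℚ)
    (D : List (Fin n)) : Prop :=
  D.Nodup ∧ (∀ i, i ∈ D ↔ l i ≤ C) ∧ D.Pairwise (DSucc v l t)

/-- `i` is a swap item for capacity `C`: on the density-sorted list `D` of all
items of size at most `C`, the modified greedy algorithm finds `i` as the first
item after its maximal fitting prefix `P`, and `v i > v(P)`, so `MGreedy`
returns `{i}`. -/
def SwapFor {n : ℕ} (v l : Fin n → ℚ) (t : Fin n → Fin n) (i : Fin n) (C : ℚ) : Prop :=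
  ∃ D : List (Fin n), IsDensityList v l t C D ∧
    D[(prefixPack l C D).length]? = some i ∧
    ((prefixPack l C D).map v).sum < v i

/-- `i` is a swap item if it is a swap item for some capacity. -/
def IsSwapItem {n : ℕ} (v l : Fin n → ℚ) (t : Fin n → Fin n) (i : Fin n) : Prop :=
  ∃ C : ℚ, SwapFor v l t i C

/-- Insert `x` into a list immediately after the maximal prefix of elements
satisfying `p`. -/
def insertAfter {α : Type*} (p : α → Prop) [DecidablePred p] (x : α) : List α → List α
  | [] => [x]
  | y :: ys => if p y then y :: insertAfter p x ys else x :: y :: ys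

open Classical in
/-- The algorithm `Universal`: process the items in the order given by `L`
(non-decreasing sizes), starting from the empty sequence; a swap item is
inserted at the front of the current sequence, any other item `x` is inserted
immediately after the maximal prefix of items `y` with `d̃(y) ≻ d̃(x)`. -/
noncomputable def universalAlg {n : ℕ} (v l : Fin n → ℚ) (t : Fin n → Fin n)
    (L : List (Fin n)) : List (Fin n) :=
  L.foldl (fun acc x =>
    if IsSwapItem v l t x then x :: acc
    else insertAfter (fun y => DSucc v l t y x) x acc) []

section Universal

variable {n : ℕ} {v l : Fin n → ℚ} {t : Fin n → Fin n}

/-! ### The tie-broken density order -/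

/-- The tie-broken density `d̃(i)` as an element of a lexicographic product. -/
def densKey (v l : Fin n → ℚ) (t : Fin n → Fin n) (i : Fin n) : ℚ ×ₗ Fin n :=
  toLex (v i / l i, t i)

lemma dSucc_iff (i j : Fin n) : DSucc v l t i j ↔ densKey v l t j < densKey v l t i := by
  unfold DSucc densKey
  rw [Prod.Lex.toLex_lt_toLex]
  simp only [eq_comm]

lemma densKey_injective (ht : Function.Bijective t) : Function.Injective (densKey v l t) := by
  intro i j h
  have h2 : (v i / l i, t i) = (v j / l j, t j) := toLex.injective h
  exact ht.1 (Prod.mk.inj h2).2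

lemma DSucc.trans' {i j k : Fin n} (h1 : DSucc v l t i j) (h2 : DSucc v l t j k) :
    DSucc v l t i k := by
  rw [dSucc_iff] at *
  exact h2.trans h1

lemma dSucc_irrefl (i : Fin n) : ¬ DSucc v l t i i := by
  rw [dSucc_iff]
  exact lt_irrefl _

lemma dSucc_of_not (ht : Function.Bijective t) {i j : Fin n} (hne : i ≠ j)
    (h : ¬ DSucc v l t i j) : DSucc v l t j i := by
  rw [dSucc_iff] at *
  exact lt_of_le_of_ne (not_lt.1 h) fun e => hne (densKey_injective ht e)

lemma DSucc.div_le {i j : Fin n} (h : DSucc v l t i j) : v j / l j ≤ v i / l i := by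
  rcases h with h | h
  · exact h.le
  · exact h.1.ge

/-- A denser item which is at least as large is at least as valuable. -/
lemma DSucc.value_le (hv : ∀ i, 0 ≤ v i) (hl : ∀ i, 0 < l i) {i j : Fin n}
    (h : DSucc v l t i j) (hs : l j ≤ l i) : v j ≤ v i := by
  calc v j = v j / l j * l j := (div_mul_cancel₀ _ (hl j).ne').symm
    _ ≤ v i / l i * l i :=
      mul_le_mul h.div_le hs (hl j).le (div_nonneg (hv i) (hl i).le)
    _ = v i := div_mul_cancel₀ _ (hl i).ne'

lemma exists_isDensityList (ht : Function.Bijective t) (C : ℚ) :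
    ∃ D : List (Fin n), IsDensityList v l t C D := by
  classical
  let r : Fin n → Fin n → Prop := fun i j => densKey v l t j ≤ densKey v l t i
  have : Std.Total r := ⟨fun i j => le_total _ _⟩
  have : IsTrans (Fin n) r := ⟨fun i j k h1 h2 => le_trans h2 h1⟩
  let D := ((List.finRange n).filter fun i => l i ≤ C).insertionSort r
  have hnd : D.Nodup :=
    (List.perm_insertionSort r _).nodup_iff.2 ((List.nodup_finRange n).filter _)
  refine ⟨D, hnd, fun i => ?_, ?_⟩
  · rw [(List.perm_insertionSort r _).mem_iff]
    simp
  · have hs : D.Pairwise r := List.pairwise_insertionSort r _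
    refine (hs.and hnd).imp ?_
    rintro i j ⟨h1, h2⟩
    rw [dSucc_iff]
    exact lt_of_le_of_ne h1 fun e => h2 (densKey_injective ht e).symm

/-! ### The greedy prefix -/

lemma prefixPack_decomp (D : List (Fin n)) :
    ∀ C : ℚ, 0 ≤ C → ((prefixPack l C D).map l).sum ≤ C ∧
    (prefixPack l C D = D ∨ ∃ g R, D = prefixPack l C D ++ g :: R ∧
      C < ((prefixPack l C D).map l).sum + l g) := by
  induction D with
  | nil => intro C hC; simp [prefixPack, hC]
  | cons x xs ih =>
    intro C hC
    by_cases h : l x ≤ C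
    · obtain ⟨h1, h2⟩ := ih (C - l x) (sub_nonneg.2 h)
      simp only [prefixPack, if_pos h, List.map_cons, List.sum_cons]
      refine ⟨by linarith, ?_⟩
      rcases h2 with h2 | ⟨g, R, h2, h3⟩
      · left; rw [h2]
      · right
        refine ⟨g, R, ?_, by linarith⟩
        rw [List.cons_append, ← h2]
    · simp only [prefixPack, if_neg h]
      refine ⟨by simpa using hC, Or.inr ⟨x, xs, rfl, ?_⟩⟩
      simpa using h

lemma prefixPack_isPrefix (D : List (Fin n)) : ∀ C : ℚ, prefixPack l C D <+: D := by
  induction D with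
  | nil => intro C; simp [prefixPack]
  | cons x xs ih =>
    intro C
    by_cases h : l x ≤ C
    · simpa only [prefixPack, if_pos h, List.cons_prefix_cons, true_and] using ih _
    · simp [prefixPack, if_neg h]

/-- A swap item is worth as much as all denser items that are not larger than it. -/
lemma sum_le_of_isSwapItem (hv : ∀ i, 0 ≤ v i) {x : Fin n} (hx : IsSwapItem v l t x)
    (T : Finset (Fin n)) (hT : ∀ p ∈ T, DSucc v l t p x ∧ l p ≤ l x) :
    ∑ p ∈ T, v p ≤ v x := by
  obtain ⟨C, D, ⟨hnd, hmem, hpw⟩, hget, hlt⟩ := hx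
  obtain ⟨Q, hQ⟩ := prefixPack_isPrefix (l := l) D C
  set P := prefixPack l C D with hP
  rw [← hQ, List.getElem?_append_right le_rfl] at hget
  cases Q with
  | nil => simp at hget
  | cons g R =>
    have hg : g = x := by simpa using hget
    subst hg
    have hPnd : P.Nodup := (List.nodup_append.1 (hQ ▸ hnd)).1
    have hgD : g ∈ D := by rw [← hQ]; simp
    have hgR : ∀ p ∈ R, DSucc v l t g p := by
      rw [← hQ] at hpw
      exact (List.pairwise_cons.1 (List.pairwise_append.1 hpw).2.1).1
    have hsub : T ⊆ P.toFinset := by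
      intro p hp
      obtain ⟨h1, h2⟩ := hT p hp
      have hpD : p ∈ D := (hmem p).2 (h2.trans ((hmem g).1 hgD))
      rw [← hQ, List.mem_append, List.mem_cons] at hpD
      rcases hpD with h | rfl | h
      · simpa using h
      · exact absurd h1 (dSucc_irrefl _)
      · exact absurd (h1.trans' (hgR p h)) (dSucc_irrefl _)
    calc ∑ p ∈ T, v p ≤ ∑ p ∈ P.toFinset, v p :=
          Finset.sum_le_sum_of_subset_of_nonneg hsub fun i _ _ => hv i
      _ = (P.map v).sum := List.sum_toFinset v hPnd
      _ ≤ v g := hlt.le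

/-- The bound from the fractional relaxation: the greedy prefix `P` together with the first item
`g` that no longer fits is worth at least as much as any feasible set. -/
lemma sum_le_greedy (hv : ∀ i, 0 ≤ v i) (hl : ∀ i, 0 < l i) {C : ℚ} {P R : List (Fin n)}
    {g : Fin n} (hD : IsDensityList v l t C (P ++ g :: R)) (hC : C < (P.map l).sum + l g)
    (S : Finset (Fin n)) (hS : ∑ i ∈ S, l i ≤ C) :
    ∑ i ∈ S, v i ≤ (P.map v).sum + v g := by
  obtain ⟨hnd, hmem, hpw⟩ := hD
  have hPnd : P.Nodup := (List.nodup_append.1 hnd).1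
  rw [List.pairwise_append, List.pairwise_cons] at hpw
  obtain ⟨-, ⟨hgR, -⟩, hPg⟩ := hpw
  set d := v g / l g with hd
  have hd0 : 0 ≤ d := div_nonneg (hv g) (hl g).le
  have hdg : d * l g = v g := div_mul_cancel₀ _ (hl g).ne'
  have hin : ∀ i ∈ P.toFinset, 0 ≤ v i - d * l i := by
    intro i hi
    have := (hPg i (by simpa using hi) g (by simp)).div_le
    rw [le_div_iff₀ (hl i)] at this
    linarith
  have hout : ∀ i ∈ S, i ∉ P.toFinset → v i - d * l i ≤ 0 := by
    intro i hi hiP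
    have hiC : l i ≤ C := (Finset.single_le_sum (fun j _ => (hl j).le) hi).trans hS
    have hiD := (hmem i).2 hiC
    rw [List.mem_append, List.mem_cons] at hiD
    rcases hiD with h | rfl | h
    · exact absurd (by simpa using h) hiP
    · linarith
    · have := (hgR i h).div_le
      rw [div_le_iff₀ (hl i)] at this
      linarith
  -- The reduced values `v i - d * l i` are nonnegative on `P` and nonpositive on `S \ P`.
  have key : ∑ i ∈ S, (v i - d * l i) ≤ ∑ i ∈ P.toFinset, (v i - d * l i) := by
    calc ∑ i ∈ S, (v i - d * l i) ≤ ∑ i ∈ S ∩ P.toFinset, (v i - d * l i) := by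
          rw [← Finset.sum_inter_add_sum_sdiff S P.toFinset]
          have : ∑ i ∈ S \ P.toFinset, (v i - d * l i) ≤ 0 :=
            Finset.sum_nonpos fun i hi =>
              hout i (Finset.mem_sdiff.1 hi).1 (Finset.mem_sdiff.1 hi).2
          linarith
      _ ≤ _ := Finset.sum_le_sum_of_subset_of_nonneg Finset.inter_subset_right
          fun i hi _ => hin i hi
  rw [Finset.sum_sub_distrib, Finset.sum_sub_distrib, ← Finset.mul_sum, ← Finset.mul_sum,
    List.sum_toFinset v hPnd, List.sum_toFinset l hPnd] at key
  nlinarith [mul_le_mul_of_nonneg_left (hS.trans hC.le) hd0]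

/-! ### The invariant of the algorithm -/

/-- The invariant of `Universal`: the sequence has no repetition, and each item `x` is worth at
least as much as all denser items after it together, and as each swap item after it. -/
def SeqInv (v l : Fin n → ℚ) (t : Fin n → Fin n) : List (Fin n) → Prop
  | [] => True
  | x :: xs => x ∉ xs ∧
      (∀ T : Finset (Fin n), (∀ p ∈ T, p ∈ xs ∧ DSucc v l t p x) → ∑ p ∈ T, v p ≤ v x) ∧
      (∀ g ∈ xs, IsSwapItem v l t g → v g ≤ v x) ∧ SeqInv v l t xs

lemma mem_insertAfter {α : Type*} (p : α → Prop) [DecidablePred p] (x z : α) (ys : List α) :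
    z ∈ insertAfter p x ys ↔ z = x ∨ z ∈ ys := by
  induction ys with
  | nil => simp [insertAfter]
  | cons y ys ih =>
    by_cases h : p y
    · simp only [insertAfter, if_pos h, List.mem_cons, ih]
      tauto
    · simp [insertAfter, if_neg h]

lemma inv_insertAfter (hv : ∀ i, 0 ≤ v i) (hl : ∀ i, 0 < l i) (ht : Function.Bijective t)
    {x : Fin n} (hx : ¬ IsSwapItem v l t x) (ys : List (Fin n)) (hxy : x ∉ ys)
    (hsz : ∀ y ∈ ys, l y ≤ l x) (h : SeqInv v l t ys) :
    SeqInv v l t (insertAfter (fun y => DSucc v l t y x) x ys) := by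
  induction ys with
  | nil =>
    refine ⟨by simp, fun T hT => ?_, by simp, trivial⟩
    have : T = ∅ := Finset.eq_empty_of_forall_notMem fun p hp => by simpa using (hT p hp).1
    simpa [this] using hv x
  | cons y ys ih =>
    have h' := h
    obtain ⟨h0, h1, h2, h3⟩ := h'
    rw [List.mem_cons, not_or] at hxy
    by_cases hd : DSucc v l t y x
    · simp only [insertAfter, if_pos hd]
      refine ⟨?_, fun T hT => h1 T fun p hp => ?_, fun g hg hgs => ?_,
        ih hxy.2 (fun z hz => hsz z (List.mem_cons_of_mem _ hz)) h3⟩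
      · rw [mem_insertAfter, not_or]
        exact ⟨fun e => hxy.1 e.symm, h0⟩
      · obtain ⟨hp1, hp2⟩ := hT p hp
        refine ⟨?_, hp2⟩
        rcases (mem_insertAfter _ _ _ _).1 hp1 with rfl | hp1
        · exact absurd (hp2.trans' hd) (dSucc_irrefl _)
        · exact hp1
      · rcases (mem_insertAfter _ _ _ _).1 hg with rfl | hg
        · exact absurd hgs hx
        · exact h2 g hg hgs
    · simp only [insertAfter, if_neg hd]
      have hxy' : DSucc v l t x y := dSucc_of_not ht (Ne.symm hxy.1) hd
      have hle : v y ≤ v x := hxy'.value_le hv hl (hsz y (by simp))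
      refine ⟨by simp [hxy], fun T hT => (h1 T fun p hp => ?_).trans hle, fun g hg hgs => ?_, h⟩
      · obtain ⟨hp1, hp2⟩ := hT p hp
        refine ⟨?_, hp2.trans' hxy'⟩
        rcases List.mem_cons.1 hp1 with rfl | hp1
        · exact absurd hp2 hd
        · exact hp1
      · rcases List.mem_cons.1 hg with rfl | hg
        · exact hle
        · exact (h2 g hg hgs).trans hle

lemma inv_cons_swap (hv : ∀ i, 0 ≤ v i) (hl : ∀ i, 0 < l i) (ht : Function.Bijective t)
    {x : Fin n} (hx : IsSwapItem v l t x) (ys : List (Fin n)) (hxy : x ∉ ys)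
    (hsz : ∀ y ∈ ys, l y ≤ l x) (h : SeqInv v l t ys) : SeqInv v l t (x :: ys) := by
  refine ⟨hxy, fun T hT => ?_, fun g hg _ => ?_, h⟩
  · exact sum_le_of_isSwapItem hv hx T fun p hp => ⟨(hT p hp).2, hsz p (hT p hp).1⟩
  · by_cases hd : DSucc v l t g x
    · simpa using sum_le_of_isSwapItem hv hx {g} (by simpa using ⟨hd, hsz g hg⟩)
    · exact (dSucc_of_not ht (by rintro rfl; exact hxy hg) hd).value_le hv hl (hsz g hg)

lemma inv_universalAlg (hv : ∀ i, 0 ≤ v i) (hl : ∀ i, 0 < l i) (ht : Function.Bijective t)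
    (L : List (Fin n)) (hLnd : L.Nodup) (hLs : L.Pairwise fun a b => l a ≤ l b) :
    SeqInv v l t (universalAlg v l t L) ∧ ∀ i ∈ L, i ∈ universalAlg v l t L := by
  classical
  -- The loop statement: after processing `L` from `acc`, the invariant holds and no item is lost.
  suffices H : ∀ (L acc : List (Fin n)), L.Nodup → L.Pairwise (fun a b => l a ≤ l b) →
      (∀ a ∈ acc, ∀ b ∈ L, l a ≤ l b ∧ a ≠ b) → SeqInv v l t acc →
      SeqInv v l t (L.foldl (fun acc x =>
        if IsSwapItem v l t x then x :: acc
        else insertAfter (fun y => DSucc v l t y x) x acc) acc) ∧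
      ∀ i, i ∈ acc ∨ i ∈ L → i ∈ L.foldl (fun acc x =>
        if IsSwapItem v l t x then x :: acc
        else insertAfter (fun y => DSucc v l t y x) x acc) acc by
    obtain ⟨h1, h2⟩ := H L [] hLnd hLs (by simp) trivial
    unfold universalAlg
    refine ⟨?_, fun i hi => ?_⟩
    · convert h1
    · convert h2 i (Or.inr hi)
  intro L
  induction L with
  | nil => intro acc _ _ _ h; simpa using h
  | cons x L ih =>
    intro acc hnd hpw hacc hinv
    rw [List.nodup_cons] at hnd
    rw [List.pairwise_cons] at hpw
    have hxa : x ∉ acc := fun h => (hacc x h x (by simp)).2 rfl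
    have hsz : ∀ y ∈ acc, l y ≤ l x := fun y hy => (hacc y hy x (by simp)).1
    rw [List.foldl_cons]
    set acc' := if IsSwapItem v l t x then x :: acc
        else insertAfter (fun y => DSucc v l t y x) x acc with hacc'
    have hmem : ∀ z, z ∈ acc' ↔ z = x ∨ z ∈ acc := by
      intro z
      rw [hacc']
      split_ifs
      · exact List.mem_cons
      · exact mem_insertAfter _ _ _ _
    have hinv' : SeqInv v l t acc' := by
      rw [hacc']
      split_ifs with hs
      · exact inv_cons_swap hv hl ht hs acc hxa hsz hinv
      · exact inv_insertAfter hv hl ht hs acc hxa hsz hinv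
    obtain ⟨h1, h2⟩ := ih acc' hnd.2 hpw.2 (by
      intro a ha b hb
      rcases (hmem a).1 ha with rfl | ha
      · exact ⟨hpw.1 b hb, fun e => hnd.1 (e ▸ hb)⟩
      · exact hacc a ha b (List.mem_cons_of_mem _ hb)) hinv'
    refine ⟨h1, fun i hi => h2 i ?_⟩
    rw [hmem]
    rw [List.mem_cons] at hi
    tauto

/-! ### Lower bounds on the packing -/

lemma pack_value_nonneg (hv : ∀ i, 0 ≤ v i) (C : ℚ) (Q : List (Fin n)) :
    0 ≤ ((pack l C Q).map v).sum :=
  List.sum_nonneg (by simpa using fun a _ => hv a)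

/-- Let `Q` satisfy the invariant. If a set `T` of items of `Q` fits, and all of them are denser than
every item of `Q` outside `T` that fits on its own, then the packing of `Q` is worth at least as much
as `T`. -/
lemma sum_le_pack (hv : ∀ i, 0 ≤ v i) (hl : ∀ i, 0 < l i) (Q : List (Fin n)) :
    ∀ (C : ℚ) (T : Finset (Fin n)), SeqInv v l t Q → (∀ p ∈ T, p ∈ Q) → ∑ p ∈ T, l p ≤ C →
      (∀ p ∈ T, ∀ x ∈ Q, x ∉ T → l x ≤ C → DSucc v l t p x) →
      ∑ p ∈ T, v p ≤ ((pack l C Q).map v).sum := by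
  classical
  induction Q with
  | nil =>
    intro C T _ hT _ _
    have : T = ∅ := Finset.eq_empty_of_forall_notMem fun p hp => by simpa using hT p hp
    simp [this, pack]
  | cons z Q ih =>
    rintro C T ⟨h0, h1, h2, h3⟩ hT hC hd
    by_cases hz : z ∈ T
    · have hzC : l z ≤ C := (Finset.single_le_sum (fun j _ => (hl j).le) hz).trans hC
      simp only [pack, if_pos hzC, List.map_cons, List.sum_cons]
      rw [← Finset.add_sum_erase T v hz]
      rw [← Finset.add_sum_erase T l hz] at hC
      have := ih (C - l z) (T.erase z) h3 (fun p hp => by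
          have := hT p (Finset.mem_of_mem_erase hp)
          exact (List.mem_cons.1 this).resolve_left (Finset.ne_of_mem_erase hp))
        (by linarith) (fun p hp x hx hxT hxC => by
          refine hd p (Finset.mem_of_mem_erase hp) x (List.mem_cons_of_mem _ hx) ?_
            (by linarith [hl z])
          exact fun h => hxT (Finset.mem_erase.2 ⟨fun e => h0 (e ▸ hx), h⟩))
      linarith
    · have hTQ : ∀ p ∈ T, p ∈ Q := fun p hp =>
        (List.mem_cons.1 (hT p hp)).resolve_left fun e => hz (e ▸ hp)
      by_cases hzC : l z ≤ C
      · simp only [pack, if_pos hzC, List.map_cons, List.sum_cons]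
        have := h1 T fun p hp => ⟨hTQ p hp, hd p hp z (by simp) hz hzC⟩
        linarith [pack_value_nonneg (l := l) hv (C - l z) Q]
      · simp only [pack, if_neg hzC]
        exact ih C T h3 hTQ hC fun p hp x hx => hd p hp x (List.mem_cons_of_mem _ hx)

/-- The packing of a sequence satisfying the invariant is worth at least as much as any swap item of
the sequence that fits. -/
lemma swap_le_pack (hv : ∀ i, 0 ≤ v i) {g : Fin n} (hg : IsSwapItem v l t g) {C : ℚ}
    (hgC : l g ≤ C) (Q : List (Fin n)) (hQ : SeqInv v l t Q) (hgQ : g ∈ Q) :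
    v g ≤ ((pack l C Q).map v).sum := by
  induction Q with
  | nil => simp at hgQ
  | cons z Q ih =>
    obtain ⟨h0, h1, h2, h3⟩ := hQ
    by_cases hzC : l z ≤ C
    · simp only [pack, if_pos hzC, List.map_cons, List.sum_cons]
      have : v g ≤ v z := by
        rcases List.mem_cons.1 hgQ with rfl | h
        · exact le_rfl
        · exact h2 g h hg
      linarith [pack_value_nonneg (l := l) hv (C - l z) Q]
    · simp only [pack, if_neg hzC]
      exact ih h3 ((List.mem_cons.1 hgQ).resolve_left fun e => hzC (e ▸ hgC))

end Universal

/-! ### Robustness -/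

/-- The permutation returned by `Universal(𝓘)` is a 2-robust
universal policy: for every capacity `0 ≤ C ≤ l(𝓘)` and every feasible set `S`
(in particular the optimal one), `v(S) ≤ 2 · v(Π(C))`. -/
theorem universal_two_robust {n : ℕ} (v l : Fin n → ℚ)
    (hv : ∀ i, 0 ≤ v i) (hl : ∀ i, 0 < l i)
    (t : Fin n → Fin n) (ht : Function.Bijective t)
    (L : List (Fin n)) (hLnd : L.Nodup) (hLall : ∀ i, i ∈ L)
    (hLsorted : L.Pairwise fun a b => l a ≤ l b)
    (C : ℚ) (hC0 : 0 ≤ C) (hC1 : C ≤ ∑ i, l i)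
    (S : Finset (Fin n)) (hS : ∑ i ∈ S, l i ≤ C) :
    ∑ i ∈ S, v i ≤ 2 * ((pack l C (universalAlg v l t L)).map v).sum := by
  obtain ⟨hinv, hall⟩ := inv_universalAlg hv hl ht L hLnd hLsorted
  obtain ⟨D, hD⟩ := exists_isDensityList (v := v) (l := l) ht C
  obtain ⟨hPC, hdec⟩ := prefixPack_decomp (l := l) D C hC0
  have hget : ∀ g R, D = prefixPack l C D ++ g :: R →
      D[(prefixPack l C D).length]? = some g := by
    intro g R h
    generalize prefixPack l C D = P at h
    subst h
    simp
  have hnd : (prefixPack l C D).Nodup := hD.1.sublist (prefixPack_isPrefix D C).sublist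
  -- The packing is worth at least as much as the greedy prefix.
  have hP : ((prefixPack l C D).map v).sum ≤
      ((pack l C (universalAlg v l t L)).map v).sum := by
    rw [← List.sum_toFinset v hnd]
    refine sum_le_pack (t := t) hv hl _ C _ hinv (fun p _ => hall p (hLall p)) ?_ ?_
    · rwa [List.sum_toFinset l hnd]
    · intro p hp x _ hxP hxC
      rw [List.mem_toFinset] at hp hxP
      have hxD := (hD.2.1 x).2 hxC
      obtain ⟨Q, hQ⟩ := prefixPack_isPrefix (l := l) D C
      have hpw := hD.2.2
      rw [← hQ] at hpw hxD
      exact (List.pairwise_append.1 hpw).2.2 p hp x ((List.mem_append.1 hxD).resolve_left hxP)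
  rcases hdec with hPD | ⟨g, R, hdec, hlt⟩
  · -- All items of size at most `C` fit together, so `S` is part of the greedy prefix.
    have hsub : S ⊆ (prefixPack l C D).toFinset := by
      intro i hi
      rw [hPD, List.mem_toFinset, hD.2.1]
      exact (Finset.single_le_sum (fun j _ => (hl j).le) hi).trans hS
    have h1 : ∑ i ∈ S, v i ≤ ((prefixPack l C D).map v).sum := by
      rw [← List.sum_toFinset v hnd]
      exact Finset.sum_le_sum_of_subset_of_nonneg hsub fun i _ _ => hv i
    linarith [pack_value_nonneg (l := l) hv C (universalAlg v l t L)]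
  · have hopt : ∑ i ∈ S, v i ≤ ((prefixPack l C D).map v).sum + v g :=
      sum_le_greedy hv hl (hdec ▸ hD) hlt S hS
    by_cases hs : ((prefixPack l C D).map v).sum < v g
    · have hgC : l g ≤ C := (hD.2.1 g).1 (by rw [hdec]; simp)
      have := swap_le_pack hv ⟨C, D, hD, hget g R hdec, hs⟩ hgC _ hinv (hall g (hLall g))
      linarith
    · linarith
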